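/- arXiv:1904.00670 — 3 statements merged into one kernel-verified Lean document; each statement's English description precedes it below -/
import Mathlib

section
/- Let d ≥ 1, n ≥ 1, let θ*_1, ..., θ*_n ∈ ℝ^d, and let M_1, ..., M_n be symmetric positive definite real d×d matrices. Let p : ℝ^d → ℝ be continuous and nonnegative with p(θ*_i) > 0 for every i, and let h : ℝ^d → ℝ be continuous. Then the limit as ε → 0⁺ of the ratio (∑_{i=1}^n ∫_{C_ε(θ*_i, M_i)} h(θ) p(θ) dθ) / (∑_{i=1}^n ∫_{C_ε(θ*_i, M_i)} p(θ) dθ) exists and equals (∑_{i=1}^n (det M_i)^{-1/2} p(θ*_i) h(θ*_i)) / (∑_{i=1}^n (det M_i)^{-1/2} p(θ*_i)). -/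
open MeasureTheory Filter Matrix

/-- The acceptance ellipsoid `C_ε(θ*, M) = {θ : (θ - θ*)ᵀ M (θ - θ*) ≤ ε}`. -/
def acceptanceEllipsoid (d : ℕ) (M : Matrix (Fin d) (Fin d) ℝ) (c : Fin d → ℝ) (ε : ℝ) :
    Set (Fin d → ℝ) :=
  {θ | (θ - c) ⬝ᵥ M.mulVec (θ - c) ≤ ε}

open scoped MatrixOrder Matrix.Norms.L2Operator in
lemma exists_factor {d : ℕ} {M : Matrix (Fin d) (Fin d) ℝ} (hM : M.PosDef) :
    ∃ B : Matrix (Fin d) (Fin d) ℝ, IsUnit B ∧ M = Bᵀ * B := by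
  obtain ⟨y, hy, h⟩ := CStarAlgebra.isStrictlyPositive_iff_eq_star_mul_self.mp
    hM.isStrictlyPositive
  refine ⟨y, hy, ?_⟩
  rw [h, Matrix.star_eq_conjTranspose, Matrix.conjTranspose_eq_transpose_of_trivial]

def unitK (d : ℕ) : Set (Fin d → ℝ) := {x | x ⬝ᵥ x ≤ 1}

lemma unitK_compact (d : ℕ) : IsCompact (unitK d) := by
  refine (isCompact_Icc (a := (fun _ => -1 : Fin d → ℝ)) (b := fun _ => 1)).of_isClosed_subset
    ?_ ?_
  · exact isClosed_le (by simp only [dotProduct]; fun_prop) continuous_const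
  · intro x hx
    have key : ∀ i, |x i| ≤ 1 := by
      intro i
      have h1 : x i * x i ≤ x ⬝ᵥ x :=
        Finset.single_le_sum (f := fun i => x i * x i) (fun i _ => mul_self_nonneg _)
          (Finset.mem_univ i)
      have h2 : x ⬝ᵥ x ≤ 1 := hx
      rw [abs_le]
      constructor <;> nlinarith
    exact ⟨fun i => (abs_le.1 (key i)).1, fun i => (abs_le.1 (key i)).2⟩

lemma unitK_pos (d : ℕ) : 0 < volume.real (unitK d) := by
  refine ENNReal.toReal_pos ?_ (unitK_compact d).measure_lt_top.ne
  have ho : IsOpen {x : Fin d → ℝ | x ⬝ᵥ x < 1} :=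
    isOpen_lt (by simp only [dotProduct]; fun_prop) continuous_const
  have := ho.measure_pos volume ⟨0, by simp⟩
  exact (this.trans_le (measure_mono fun x (hx : x ⬝ᵥ x < 1) => hx.le)).ne'

lemma ellipsoid_eq {d : ℕ} {M B : Matrix (Fin d) (Fin d) ℝ} (hB : IsUnit B) (h : M = Bᵀ * B)
    (c : Fin d → ℝ) {t : ℝ} (ht : 0 < t) :
    acceptanceEllipsoid d M c (t ^ 2) = (fun x => c + (t • B⁻¹).mulVec x) '' unitK d := by
  have hdet : IsUnit B.det := (Matrix.isUnit_iff_isUnit_det B).1 hB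
  have hq : ∀ v : Fin d → ℝ, v ⬝ᵥ M.mulVec v = B.mulVec v ⬝ᵥ B.mulVec v := by
    intro v
    rw [h, ← Matrix.mulVec_mulVec, Matrix.dotProduct_mulVec, Matrix.vecMul_transpose]
  ext θ
  simp only [acceptanceEllipsoid, unitK, Set.mem_setOf_eq, Set.mem_image, hq]
  constructor
  · intro hθ
    refine ⟨t⁻¹ • B.mulVec (θ - c), ?_, ?_⟩
    · rw [smul_dotProduct, dotProduct_smul, smul_eq_mul, smul_eq_mul, ← mul_assoc]
      calc _ ≤ t⁻¹ * t⁻¹ * t ^ 2 := by gcongr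
        _ = 1 := by field_simp
    · rw [Matrix.smul_mulVec, Matrix.mulVec_smul, smul_smul, mul_inv_cancel₀ ht.ne', one_smul,
        Matrix.mulVec_mulVec, Matrix.nonsing_inv_mul _ hdet, Matrix.one_mulVec]
      simp
  · rintro ⟨x, hx, rfl⟩
    rw [add_sub_cancel_left, Matrix.smul_mulVec, Matrix.mulVec_smul, Matrix.mulVec_mulVec,
      Matrix.mul_nonsing_inv _ hdet, Matrix.one_mulVec, smul_dotProduct, dotProduct_smul,
      smul_eq_mul, smul_eq_mul]
    nlinarith [mul_le_mul_of_nonneg_left hx (sq_nonneg t)]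

lemma integral_ellipsoid {d : ℕ} {M B : Matrix (Fin d) (Fin d) ℝ} (hB : IsUnit B)
    (h : M = Bᵀ * B) (c : Fin d → ℝ) {t : ℝ} (ht : 0 < t) (f : (Fin d → ℝ) → ℝ) :
    ∫ θ in acceptanceEllipsoid d M c (t ^ 2), f θ =
      t ^ d * ((Real.sqrt M.det)⁻¹ * ∫ x in unitK d, f (c + t • B⁻¹.mulVec x)) := by
  have hdet : IsUnit B.det := (Matrix.isUnit_iff_isUnit_det B).1 hB
  have hs : Real.sqrt M.det = |B.det| := by
    rw [h, Matrix.det_mul, Matrix.det_transpose, Real.sqrt_mul_self_eq_abs]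
  have hinj : Function.Injective (fun x => c + (t • B⁻¹).mulVec x) := by
    intro x y hxy
    have h1 := add_left_cancel hxy
    have h2 : B.mulVec ((t • B⁻¹).mulVec x) = B.mulVec ((t • B⁻¹).mulVec y) := by rw [h1]
    simp only [Matrix.smul_mulVec, Matrix.mulVec_smul, Matrix.mulVec_mulVec,
      Matrix.mul_nonsing_inv _ hdet, Matrix.one_mulVec] at h2
    exact smul_right_injective _ ht.ne' h2
  rw [ellipsoid_eq hB h c ht, integral_image_eq_integral_abs_det_fderiv_smul volume
    (f' := fun _ => LinearMap.toContinuousLinearMap (Matrix.toLin' (t • B⁻¹)))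
    (unitK_compact d).measurableSet _ hinj.injOn]
  · rw [hs, LinearMap.det_toContinuousLinearMap, LinearMap.det_toLin', Matrix.det_smul,
      Matrix.det_nonsing_inv, Ring.inverse_eq_inv']
    simp only [smul_eq_mul, integral_const_mul, Matrix.smul_mulVec, Fintype.card_fin]
    rw [abs_mul, abs_inv, abs_of_pos (pow_pos ht d)]
    ring
  · intro x _
    exact ((LinearMap.toContinuousLinearMap
      (Matrix.toLin' (t • B⁻¹))).hasFDerivAt.const_add c).hasFDerivWithinAt

lemma tendsto_part {d : ℕ} (A : Matrix (Fin d) (Fin d) ℝ) (c : Fin d → ℝ)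
    {f : (Fin d → ℝ) → ℝ} (hf : Continuous f) :
    Tendsto (fun ε : ℝ => ∫ x in unitK d, f (c + Real.sqrt ε • A.mulVec x))
      (nhdsWithin 0 (Set.Ioi 0)) (nhds (volume.real (unitK d) * f c)) := by
  have h1 : Continuous (fun t : ℝ => ∫ x in unitK d, f (c + t • A.mulVec x)) := by
    refine continuous_parametric_integral_of_continuous ?_ (unitK_compact d)
    simp only [Function.uncurry_def]
    fun_prop
  have h2 := ((h1.comp Real.continuous_sqrt).tendsto 0).mono_left
    (nhdsWithin_le_nhds (s := Set.Ioi 0))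
  simpa [Function.comp_def] using h2

/-- Theorem 1 of the paper (limiting statement): as ε → 0⁺, the ROMC posterior expectation
reduces to the OMC weighted average with weights `(det M_i)^{-1/2} p(θ*_i)`. -/
theorem romc_limit_eq_omc (d n : ℕ) (hd : 1 ≤ d) (hn : 1 ≤ n)
    (θs : Fin n → (Fin d → ℝ)) (M : Fin n → Matrix (Fin d) (Fin d) ℝ)
    (hM : ∀ i, (M i).PosDef)
    (p : (Fin d → ℝ) → ℝ) (hp : Continuous p) (hp0 : ∀ θ, 0 ≤ p θ)
    (hpθ : ∀ i, 0 < p (θs i))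
    (h : (Fin d → ℝ) → ℝ) (hh : Continuous h) :
    Tendsto
      (fun ε : ℝ =>
        (∑ i, ∫ θ in acceptanceEllipsoid d (M i) (θs i) ε, h θ * p θ) /
        (∑ i, ∫ θ in acceptanceEllipsoid d (M i) (θs i) ε, p θ))
      (nhdsWithin 0 (Set.Ioi 0))
      (nhds
        ((∑ i, (Real.sqrt (M i).det)⁻¹ * p (θs i) * h (θs i)) /
         (∑ i, (Real.sqrt (M i).det)⁻¹ * p (θs i)))) := by
  choose B hB hMB using fun i => exists_factor (hM i)
  set V := volume.real (unitK d) with hV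
  have hVpos : 0 < V := unitK_pos d
  have hsum : ∀ f : (Fin d → ℝ) → ℝ, Continuous f → Tendsto (fun ε : ℝ =>
      ∑ i, (Real.sqrt (M i).det)⁻¹ *
        ∫ x in unitK d, f (θs i + Real.sqrt ε • (B i)⁻¹.mulVec x))
      (nhdsWithin 0 (Set.Ioi 0))
      (nhds (∑ i, (Real.sqrt (M i).det)⁻¹ * (V * f (θs i)))) := fun f hf =>
    tendsto_finsetSum _ fun i _ => (tendsto_part _ _ hf).const_mul _
  have hint : ∀ f : (Fin d → ℝ) → ℝ, ∀ ε : ℝ, 0 < ε →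
      ∑ i, ∫ θ in acceptanceEllipsoid d (M i) (θs i) ε, f θ =
      Real.sqrt ε ^ d * ∑ i, (Real.sqrt (M i).det)⁻¹ *
        ∫ x in unitK d, f (θs i + Real.sqrt ε • (B i)⁻¹.mulVec x) := by
    intro f ε hε
    rw [Finset.mul_sum]
    refine Finset.sum_congr rfl fun i _ => ?_
    rw [← integral_ellipsoid (hB i) (hMB i) (θs i) (Real.sqrt_pos.2 hε) f, Real.sq_sqrt hε.le]
  have : Nonempty (Fin n) := ⟨⟨0, hn⟩⟩
  have hD : 0 < ∑ i, (Real.sqrt (M i).det)⁻¹ * (V * p (θs i)) :=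
    Finset.sum_pos (fun i _ => mul_pos (inv_pos.2 (Real.sqrt_pos.2 (hM i).det_pos))
      (mul_pos hVpos (hpθ i))) Finset.univ_nonempty
  have key := (hsum (fun θ => h θ * p θ) (hh.mul hp)).div (hsum p hp) hD.ne'
  have hlim : (∑ i, (Real.sqrt (M i).det)⁻¹ * (V * (h (θs i) * p (θs i)))) /
      (∑ i, (Real.sqrt (M i).det)⁻¹ * (V * p (θs i))) =
      (∑ i, (Real.sqrt (M i).det)⁻¹ * p (θs i) * h (θs i)) /
         (∑ i, (Real.sqrt (M i).det)⁻¹ * p (θs i)) := by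
    rw [← mul_div_mul_left _ (∑ i, (Real.sqrt (M i).det)⁻¹ * p (θs i)) hVpos.ne',
      Finset.mul_sum, Finset.mul_sum]
    congr 1 <;> exact Finset.sum_congr rfl fun i _ => by ring
  rw [← hlim]
  refine key.congr' ?_
  filter_upwards [self_mem_nhdsWithin] with ε hε
  have hε' : 0 < ε := hε
  rw [hint _ ε hε', hint _ ε hε', mul_div_mul_left _ _ (pow_pos (Real.sqrt_pos.2 hε') d).ne']
  rfl
end

section
/- Let n ≥ 1 and for each i = 1, ..., n let C_i ⊆ ℝ^d be measurable, let q_i be a nonnegative measurable density on ℝ^d with q_i(θ) > 0 for all θ ∈ C_i, and let (θ_{ij})_{j≥1} be i.i.d. ℝ^d-valued random variables with law having density q_i, with all the sequences (θ_{ij})_{i,j} jointly independent. Let p : ℝ^d → ℝ be a nonnegative measurable (prior) density and h : ℝ^d → ℝ measurable, define the weights w_{ij} = 1_{C_i}(θ_{ij}) p(θ_{ij})/q_i(θ_{ij}), and assume that for each i the functions θ ↦ 1_{C_i}(θ) p(θ) and θ ↦ h(θ) 1_{C_i}(θ) p(θ) are Lebesgue integrable and that ∑_{i=1}^n ∫_{C_i}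 p(θ) dθ > 0. Then almost surely (∑_{i=1}^n ∑_{j=1}^m h(θ_{ij}) w_{ij}) / (∑_{i=1}^n ∑_{j=1}^m w_{ij}) → (∑_{i=1}^n ∫_{C_i} h(θ) p(θ) dθ) / (∑_{i=1}^n ∫_{C_i} p(θ) dθ) as m → ∞. -/
open MeasureTheory Filter ProbabilityTheory

theorem romc_aux_slln {Ω : Type*} [MeasurableSpace Ω] (P : Measure Ω)
    (d : ℕ) (q : (Fin d → ℝ) → ℝ) (hq : Measurable q) (hq0 : ∀ x, 0 ≤ q x)
    (T : ℕ → Ω → (Fin d → ℝ)) (hmeas : ∀ j, Measurable (T j))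
    (hlaw : ∀ j, Measure.map (T j) P =
      (volume : Measure (Fin d → ℝ)).withDensity fun x => ENNReal.ofReal (q x))
    (hindep : Pairwise fun j k => IndepFun (T j) (T k) P)
    (g F : (Fin d → ℝ) → ℝ) (hg : Measurable g) (hgF : ∀ x, q x * g x = F x)
    (hF : Integrable F (volume : Measure (Fin d → ℝ))) :
    ∀ᵐ ω ∂P, Tendsto (fun m : ℕ => (∑ j ∈ Finset.range m, g (T j ω)) / m) atTop
      (nhds (∫ x, F x)) := by
  have hqm : Measurable fun x => ENNReal.ofReal (q x) := hq.ennreal_ofReal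
  have hlt : ∀ᵐ x ∂(volume : Measure (Fin d → ℝ)), ENNReal.ofReal (q x) < ⊤ :=
    Eventually.of_forall fun x => ENNReal.ofReal_lt_top
  have hfun : (fun x => (ENNReal.ofReal (q x)).toReal • g x) = F := by
    funext x
    rw [ENNReal.toReal_ofReal (hq0 x), smul_eq_mul, hgF]
  have hI : Integrable g (Measure.map (T 0) P) := by
    rw [hlaw, integrable_withDensity_iff_integrable_smul' hqm hlt, hfun]
    exact hF
  have hE : ∫ ω, g (T 0 ω) ∂P = ∫ x, F x := by
    rw [← integral_map (hmeas 0).aemeasurable hg.aestronglyMeasurable, hlaw,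
      integral_withDensity_eq_integral_toReal_smul hqm hlt, hfun]
  have := strong_law_ae_real (μ := P) (fun j ω => g (T j ω))
    (hI.comp_measurable (hmeas 0))
    (fun j k hjk => (hindep hjk).comp hg hg)
    (fun j => (IdentDistrib.mk (hmeas j).aemeasurable (hmeas 0).aemeasurable
      ((hlaw j).trans (hlaw 0).symm)).comp hg)
  rw [hE] at this
  exact this

/-- Consistency of the Robust OMC estimator (Equations (9)–(12) of the paper): the
self-normalized importance-sampling estimator built from `n` acceptance regions `C_i`
and proposal densities `q_i` positive on them converges almost surely, as the number `m`
of proposal samples per region grows, to the approximate posterior expectation. -/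
theorem romc_estimator_consistency {Ω : Type*} [MeasurableSpace Ω] (P : Measure Ω)
    [IsProbabilityMeasure P] (d n : ℕ) (hn : 1 ≤ n)
    (C : Fin n → Set (Fin d → ℝ)) (hCmeas : ∀ i, MeasurableSet (C i))
    (q : Fin n → (Fin d → ℝ) → ℝ) (hq : ∀ i, Measurable (q i)) (hq0 : ∀ i x, 0 ≤ q i x)
    (hqC : ∀ i, ∀ x ∈ C i, 0 < q i x)
    (θs : Fin n × ℕ → Ω → (Fin d → ℝ))
    (hmeas : ∀ ij, Measurable (θs ij))
    (hlaw : ∀ i j, Measure.map (θs (i, j)) P =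
      (volume : Measure (Fin d → ℝ)).withDensity fun x => ENNReal.ofReal (q i x))
    (hindep : iIndepFun θs P)
    (p : (Fin d → ℝ) → ℝ) (hp : Measurable p) (hp0 : ∀ x, 0 ≤ p x)
    (h : (Fin d → ℝ) → ℝ) (hh : Measurable h)
    (hint₁ : ∀ i, Integrable (fun x => (C i).indicator (fun _ => (1 : ℝ)) x * p x)
      (volume : Measure (Fin d → ℝ)))
    (hint₂ : ∀ i, Integrable (fun x => h x * ((C i).indicator (fun _ => (1 : ℝ)) x * p x))
      (volume : Measure (Fin d → ℝ)))
    (hden : 0 < ∑ i, ∫ θ in C i, p θ) :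
    ∀ᵐ ω ∂P, Tendsto
      (fun m : ℕ =>
        (∑ i, ∑ j ∈ Finset.range m,
            h (θs (i, j) ω) * (C i).indicator (fun y => p y / q i y) (θs (i, j) ω)) /
        (∑ i, ∑ j ∈ Finset.range m,
            (C i).indicator (fun y => p y / q i y) (θs (i, j) ω)))
      atTop
      (nhds ((∑ i, ∫ θ in C i, h θ * p θ) / (∑ i, ∫ θ in C i, p θ))) := by
  have hgm : ∀ i, Measurable ((C i).indicator (fun y => p y / q i y)) := fun i =>
    (hp.div (hq i)).indicator (hCmeas i)
  have hkey : ∀ i x, q i x * (C i).indicator (fun y => p y / q i y) x =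
      (C i).indicator (fun _ => (1 : ℝ)) x * p x := by
    intro i x
    by_cases hx : x ∈ C i
    · have := (hqC i x hx).ne'
      simp only [Set.indicator_of_mem hx]
      field_simp
    · simp [Set.indicator_of_notMem hx]
  have hpair : ∀ i, Pairwise fun j k => IndepFun (θs (i, j)) (θs (i, k)) P := by
    intro i j k hjk
    exact hindep.indepFun (by simpa using hjk)
  have hD : ∀ i, ∀ᵐ ω ∂P, Tendsto (fun m : ℕ => (∑ j ∈ Finset.range m,
      (C i).indicator (fun y => p y / q i y) (θs (i, j) ω)) / (m : ℝ)) atTop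
      (nhds (∫ θ in C i, p θ)) := by
    intro i
    have := romc_aux_slln P d (q i) (hq i) (hq0 i) (fun j => θs (i, j)) (fun j => hmeas _)
      (hlaw i) (hpair i) _ _ (hgm i) (hkey i) (hint₁ i)
    have e : ∫ x, (C i).indicator (fun _ => (1 : ℝ)) x * p x = ∫ θ in C i, p θ := by
      rw [← integral_indicator (hCmeas i)]
      congr 1
      funext x
      by_cases hx : x ∈ C i <;> simp [hx]
    rwa [e] at this
  have hN : ∀ i, ∀ᵐ ω ∂P, Tendsto (fun m : ℕ => (∑ j ∈ Finset.range m,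
      h (θs (i, j) ω) * (C i).indicator (fun y => p y / q i y) (θs (i, j) ω)) / (m : ℝ)) atTop
      (nhds (∫ θ in C i, h θ * p θ)) := by
    intro i
    have := romc_aux_slln P d (q i) (hq i) (hq0 i) (fun j => θs (i, j)) (fun j => hmeas _)
      (hlaw i) (hpair i) (fun x => h x * (C i).indicator (fun y => p y / q i y) x) _
      (hh.mul (hgm i)) (fun x => by rw [mul_left_comm, hkey i x]) (hint₂ i)
    have e : ∫ x, h x * ((C i).indicator (fun _ => (1 : ℝ)) x * p x)
        = ∫ θ in C i, h θ * p θ := by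
      rw [← integral_indicator (hCmeas i)]
      congr 1
      funext x
      by_cases hx : x ∈ C i <;> simp [hx]
    rwa [e] at this
  filter_upwards [ae_all_iff.2 hD, ae_all_iff.2 hN] with ω h1 h2
  have t1 := tendsto_finsetSum Finset.univ fun i _ => h1 i
  have t2 := tendsto_finsetSum Finset.univ fun i _ => h2 i
  refine (t2.div t1 hden.ne').congr' ?_
  filter_upwards [eventually_gt_atTop 0] with m hm
  have hm' : (m : ℝ) ≠ 0 := by positivity
  simp only [Pi.div_apply, ← Finset.sum_div]
  exact div_div_div_cancel_right₀ hm' _ _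
end

section
/- Let n ≥ 1 and for each i = 1, ..., n let B_i ⊆ ℝ^d be a bounded measurable set with 0 < vol(B_i) < ∞ (a bounding box), let C_i ⊆ B_i be measurable (the acceptance region), and let (θ_{ij})_{j≥1} be i.i.d. random variables uniformly distributed on B_i, with all the sequences jointly independent. Let p : ℝ^d → ℝ be a nonnegative measurable density, bounded on each B_i, and let h : ℝ^d → ℝ be measurable and bounded on each B_i. Define the weights w_{ij} = 1_{C_i}(θ_{ij}) · p(θ_{ij}) · vol(B_i), and assume ∑_{i=1}^n ∫_{C_i} p(θ) dθ > 0. Then almost surely (∑_{i=1}^n ∑_{j=1}^m h(θ_{ij}) w_{ij}) / (∑_{i=1}^n ∑_{j=1}^m w_{ij}) → (∑_{i=1}^n ∫_{C_i} h(θ) p(θ) dθ) / (∑_{i=1}^n ∫_{C_i} p(θ) dθ) as m → ∞. -/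
open MeasureTheory Filter ProbabilityTheory

theorem romc_box_aux {Ω : Type*} [MeasurableSpace Ω] (P : Measure Ω)
    [IsProbabilityMeasure P] (d : ℕ)
    (B : Set (Fin d → ℝ)) (hBmeas : MeasurableSet B)
    (hBpos : 0 < volume B) (hBfin : volume B < ⊤)
    (C : Set (Fin d → ℝ)) (hCmeas : MeasurableSet C) (hCB : C ⊆ B)
    (X : ℕ → Ω → (Fin d → ℝ)) (hmeas : ∀ j, Measurable (X j))
    (hlaw : ∀ j, Measure.map (X j) P =
      (volume B)⁻¹ • (volume : Measure (Fin d → ℝ)).restrict B)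
    (hindep : Pairwise fun j k => IndepFun (X j) (X k) P)
    (g : (Fin d → ℝ) → ℝ) (hg : Measurable g)
    (hgb : ∃ K : ℝ, ∀ x ∈ B, |g x| ≤ K) :
    ∀ᵐ ω ∂P, Tendsto (fun m : ℕ => (∑ j ∈ Finset.range m,
        C.indicator (fun _ => (1 : ℝ)) (X j ω) * g (X j ω) * (volume B).toReal) / (m : ℝ))
      atTop (nhds (∫ θ in C, g θ)) := by
  obtain ⟨K, hK⟩ := hgb
  set F : (Fin d → ℝ) → ℝ := fun x =>
    C.indicator (fun _ => (1 : ℝ)) x * g x * (volume B).toReal with hF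
  have hFm : Measurable F :=
    ((measurable_const.indicator hCmeas).mul hg).mul_const _
  have hFind : F = C.indicator (fun x => g x * (volume B).toReal) := by
    funext x
    by_cases hx : x ∈ C <;> simp [hF, hx]
  have hFi : Integrable F (Measure.map (X 0) P) := by
    rw [hlaw 0]
    refine Integrable.smul_measure ?_ (by simpa using hBpos.ne')
    rw [hFind]
    refine Integrable.indicator ?_ hCmeas
    refine Integrable.mul_const ?_ _
    haveI : IsFiniteMeasure ((volume : Measure (Fin d → ℝ)).restrict B) :=
      ⟨by simpa using hBfin⟩
    refine Integrable.of_bound hg.aestronglyMeasurable K ?_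
    filter_upwards [ae_restrict_mem hBmeas] with x hx
    exact hK x hx
  have hlim := strong_law_ae_real (μ := P) (fun j ω => F (X j ω))
    (hFi.comp_measurable (hmeas 0))
    (fun j k hjk => (hindep hjk).comp hFm hFm)
    (fun j => (IdentDistrib.mk (hmeas j).aemeasurable (hmeas 0).aemeasurable
      (by rw [hlaw, hlaw])).comp hFm)
  have hE : ∫ ω, F (X 0 ω) ∂P = ∫ θ in C, g θ := by
    rw [← integral_map (hmeas 0).aemeasurable hFm.aestronglyMeasurable, hlaw 0,
      integral_smul_measure, hFind, integral_indicator hCmeas,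
      Measure.restrict_restrict hCmeas, Set.inter_eq_left.mpr hCB, integral_mul_const,
      ENNReal.toReal_inv, smul_eq_mul]
    have : (volume B).toReal ≠ 0 := (ENNReal.toReal_pos hBpos.ne' hBfin.ne).ne'
    field_simp
  rw [hE] at hlim
  exact hlim

/-- Correctness of the weight formula `w_ij = 1_{C_i}(θ_ij) · p(θ_ij) · vol(B_i)` used in
Algorithms 2 and 3 of the paper: with proposals uniform on bounding boxes `B_i ⊇ C_i`,
the self-normalized weighted estimator converges almost surely to the approximate
posterior expectation. -/
theorem romc_box_weights_consistency {Ω : Type*} [MeasurableSpace Ω] (P : Measure Ω)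
    [IsProbabilityMeasure P] (d n : ℕ) (hn : 1 ≤ n)
    (B : Fin n → Set (Fin d → ℝ)) (hBmeas : ∀ i, MeasurableSet (B i))
    (hBbdd : ∀ i, Bornology.IsBounded (B i))
    (hBpos : ∀ i, 0 < volume (B i)) (hBfin : ∀ i, volume (B i) < ⊤)
    (C : Fin n → Set (Fin d → ℝ)) (hCmeas : ∀ i, MeasurableSet (C i))
    (hCB : ∀ i, C i ⊆ B i)
    (θs : Fin n × ℕ → Ω → (Fin d → ℝ))
    (hmeas : ∀ ij, Measurable (θs ij))
    (hlaw : ∀ i j, Measure.map (θs (i, j)) P =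
      (volume (B i))⁻¹ • (volume : Measure (Fin d → ℝ)).restrict (B i))
    (hindep : iIndepFun θs P)
    (p : (Fin d → ℝ) → ℝ) (hp : Measurable p) (hp0 : ∀ x, 0 ≤ p x)
    (hpbdd : ∀ i, ∃ K : ℝ, ∀ x ∈ B i, p x ≤ K)
    (h : (Fin d → ℝ) → ℝ) (hh : Measurable h)
    (hhbdd : ∀ i, ∃ K : ℝ, ∀ x ∈ B i, |h x| ≤ K)
    (hden : 0 < ∑ i, ∫ θ in C i, p θ) :
    ∀ᵐ ω ∂P, Tendsto
      (fun m : ℕ =>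
        (∑ i, ∑ j ∈ Finset.range m,
            h (θs (i, j) ω) *
              ((C i).indicator (fun _ => (1 : ℝ)) (θs (i, j) ω) * p (θs (i, j) ω) *
                (volume (B i)).toReal)) /
        (∑ i, ∑ j ∈ Finset.range m,
            (C i).indicator (fun _ => (1 : ℝ)) (θs (i, j) ω) * p (θs (i, j) ω) *
              (volume (B i)).toReal))
      atTop
      (nhds ((∑ i, ∫ θ in C i, h θ * p θ) / (∑ i, ∫ θ in C i, p θ))) := by
  have hind : ∀ i, Pairwise fun j k => IndepFun (θs (i, j)) (θs (i, k)) P := by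
    intro i j k hjk
    exact hindep.indepFun (by simpa using hjk)
  have hD : ∀ᵐ ω ∂P, ∀ i, _ := ae_all_iff.mpr fun i =>
    romc_box_aux P d (B i) (hBmeas i) (hBpos i) (hBfin i) (C i) (hCmeas i) (hCB i)
      (fun j => θs (i, j)) (fun j => hmeas _) (hlaw i) (hind i) p hp
      (by
        obtain ⟨K, hK⟩ := hpbdd i
        exact ⟨K, fun x hx => by rw [abs_of_nonneg (hp0 x)]; exact hK x hx⟩)
  have hN : ∀ᵐ ω ∂P, ∀ i, _ := ae_all_iff.mpr fun i =>
    romc_box_aux P d (B i) (hBmeas i) (hBpos i) (hBfin i) (C i) (hCmeas i) (hCB i)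
      (fun j => θs (i, j)) (fun j => hmeas _) (hlaw i) (hind i) (fun x => h x * p x)
      (hh.mul hp)
      (by
        obtain ⟨K, hK⟩ := hpbdd i
        obtain ⟨L, hL⟩ := hhbdd i
        refine ⟨L * K, fun x hx => ?_⟩
        rw [abs_mul, abs_of_nonneg (hp0 x)]
        exact mul_le_mul (hL x hx) (hK x hx) (hp0 x) ((abs_nonneg _).trans (hL x hx)))
  filter_upwards [hD, hN] with ω hDω hNω
  have h1 := tendsto_finsetSum Finset.univ (fun i _ => hDω i)
  have h2 := tendsto_finsetSum Finset.univ (fun i _ => hNω i)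
  refine (h2.div h1 hden.ne').congr' ?_
  filter_upwards [eventually_gt_atTop 0] with m hm
  have hm' : (m : ℝ) ≠ 0 := by exact_mod_cast hm.ne'
  simp only [Pi.div_apply]
  rw [← Finset.sum_div, ← Finset.sum_div, div_div_div_cancel_right₀ hm']
  congr 1
  refine Finset.sum_congr rfl fun i _ => Finset.sum_congr rfl fun j _ => ?_
  ring
end
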